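/- arXiv:1412.2193 — 3 statements merged into one kernel-verified Lean document; each statement's English description precedes it below -/
import Mathlib

section
/- Let m = n and let A be the unit sphere in ℝⁿ, and suppose X ⊇ A. If X contains the closed unit ball, then K*(X,A) = H̃^{n−1}(A) \ {0}. If X does not contain the closed unit ball, then K*(X,A) = ∅. -/
/-!
Formalization background.  Čech cohomology is not available in Mathlib, so we axiomatize it:
a `CechTheory n R G` provides reduced, unreduced and relative Čech cohomology `R`-modules with
coefficients in the `R`-module `G` for subsets of `ℝⁿ` (with the subspace topology), together
with contravariant functoriality, homotopy invariance, the comparison between reduced and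
unreduced cohomology in positive degrees, the natural projection onto reduced cohomology in
degree `0`, the convention `H̃⁰(∅) = 0`, the vanishing of the reduced cohomology of a point,
and the continuity property of Čech cohomology for directed intersections of compact sets.
-/

open Set CategoryTheory MeasureTheory Filter
open scoped ENNReal unitInterval

noncomputable section

/-- Euclidean `n`-space `ℝⁿ`. -/
abbrev Euc (n : ℕ) := EuclideanSpace ℝ (Fin n)

/-- An axiomatization of Čech cohomology with coefficients in an `R`-module `G` for subsets
of `ℝⁿ` (all subsets carry the subspace topology). -/
structure CechTheory (n : ℕ) (R : Type) [CommRing R] (G : Type) [AddCommGroup G]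
    [Module R G] : Type 1 where
  /-- reduced Čech cohomology `H̃ᵏ(A; G)` -/
  Hred : ℕ → Set (Euc n) → ModuleCat.{0} R
  /-- unreduced Čech cohomology `Hᵏ(A; G)` -/
  H : ℕ → Set (Euc n) → ModuleCat.{0} R
  /-- relative Čech cohomology `Hᵏ(X, A; G)` of a pair (used only to express orientability) -/
  Hpair : ℕ → Set (Euc n) → Set (Euc n) → ModuleCat.{0} R
  /-- the pullback on reduced cohomology induced by a continuous map -/
  mapRed : ∀ (k : ℕ) {A B : Set (Euc n)}, C(A, B) → (Hred k B ⟶ Hred k A)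
  /-- the pullback on unreduced cohomology induced by a continuous map -/
  map : ∀ (k : ℕ) {A B : Set (Euc n)}, C(A, B) → (H k B ⟶ H k A)
  mapRed_id : ∀ (k : ℕ) (A : Set (Euc n)), mapRed k (ContinuousMap.id A) = 𝟙 (Hred k A)
  mapRed_comp : ∀ (k : ℕ) {A B C' : Set (Euc n)} (f : C(A, B)) (g : C(B, C')),
    mapRed k (g.comp f) = mapRed k g ≫ mapRed k f
  map_id : ∀ (k : ℕ) (A : Set (Euc n)), map k (ContinuousMap.id A) = 𝟙 (H k A)
  map_comp : ∀ (k : ℕ) {A B C' : Set (Euc n)} (f : C(A, B)) (g : C(B, C')),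
    map k (g.comp f) = map k g ≫ map k f
  /-- homotopy invariance of reduced Čech cohomology -/
  mapRed_homotopic : ∀ (k : ℕ) {A B : Set (Euc n)} (f g : C(A, B)),
    Nonempty (f.Homotopy g) → mapRed k f = mapRed k g
  /-- homotopy invariance of unreduced Čech cohomology -/
  map_homotopic : ∀ (k : ℕ) {A B : Set (Euc n)} (f g : C(A, B)),
    Nonempty (f.Homotopy g) → map k f = map k g
  /-- in positive degrees, reduced and unreduced Čech cohomology agree -/
  redIso : ∀ (k : ℕ), 0 < k → ∀ A : Set (Euc n), Hred k A ≅ H k A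
  redIso_natural : ∀ (k : ℕ) (hk : 0 < k) {A B : Set (Euc n)} (f : C(A, B)),
    mapRed k f ≫ (redIso k hk A).hom = (redIso k hk B).hom ≫ map k f
  /-- in degree `0`, the natural projection of unreduced onto reduced cohomology -/
  projRed : ∀ A : Set (Euc n), H 0 A ⟶ Hred 0 A
  projRed_natural : ∀ {A B : Set (Euc n)} (f : C(A, B)),
    map 0 f ≫ projRed A = projRed B ≫ mapRed 0 f
  projRed_surjective : ∀ A : Set (Euc n), Function.Surjective (projRed A)
  /-- convention: `H̃⁰(∅) = 0` (hence every map into it, e.g. the one induced by the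
  inclusion of `∅` into any set, is zero) -/
  hred_empty_eq_zero : ∀ x : Hred 0 (∅ : Set (Euc n)), x = 0
  /-- the reduced cohomology of a point vanishes in all degrees -/
  hred_point : ∀ (k : ℕ) (p : Euc n) (x : Hred k ({p} : Set (Euc n))), x = 0
  /-- continuity of Čech cohomology: for a (downward) directed family of compact sets, every
  class on the intersection is the restriction of a class on some member of the family -/
  continuity : ∀ (k : ℕ) (ι : Type) [Nonempty ι] (X : ι → Set (Euc n)),
    (∀ i, IsCompact (X i)) → (∀ i j, ∃ l, X l ⊆ X i ∧ X l ⊆ X j) →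
    ∀ x : Hred k (⋂ i, X i), ∃ (i : ι) (y : Hred k (X i)),
      mapRed k ⟨Set.inclusion (Set.iInter_subset X i),
        continuous_inclusion (Set.iInter_subset X i)⟩ y = x

namespace CechTheory

variable {n : ℕ} {R : Type} [CommRing R] {G : Type} [AddCommGroup G] [Module R G]

/-- The pullback `ι(X,A)* : H̃ᵏ(X) → H̃ᵏ(A)` induced by an inclusion `A ⊆ X`
(reduced Čech cohomology). -/
def res (T : CechTheory n R G) (k : ℕ) {A X : Set (Euc n)} (h : A ⊆ X) :
    T.Hred k X ⟶ T.Hred k A :=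
  T.mapRed k ⟨Set.inclusion h, continuous_inclusion h⟩

/-- The pullback `ι(X,A)* : Hᵏ(X) → Hᵏ(A)` induced by an inclusion `A ⊆ X`
(unreduced Čech cohomology). -/
def resH (T : CechTheory n R G) (k : ℕ) {A X : Set (Euc n)} (h : A ⊆ X) :
    T.H k X ⟶ T.H k A :=
  T.map k ⟨Set.inclusion h, continuous_inclusion h⟩

/-- The algebraic coboundary `K*(X,A)` of `X` with respect to `A` (in degree `m-1`):
the complement in `H̃^{m-1}(A)` of the image of `ι(X,A)*`. -/
def K (T : CechTheory n R G) (m : ℕ) (X A : Set (Euc n)) (h : A ⊆ X) :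
    Set (T.Hred (m - 1) A) :=
  {x | x ∉ Set.range (T.res (m - 1) h)}

/-- `X` is a surface with coboundary `⊇ L` with respect to `A`:  `A ⊆ X` and `L` is disjoint
from the image of `ι(X,A)* : H̃^{m-1}(X) → H̃^{m-1}(A)`, i.e. `K*(X,A) ⊇ L`. -/
def IsSurface (T : CechTheory n R G) (m : ℕ) (A X : Set (Euc n))
    (L : Set (T.Hred (m - 1) A)) : Prop :=
  ∃ h : A ⊆ X, ∀ x ∈ L, x ∉ Set.range (T.res (m - 1) h)

/-- The collection `𝔖(A, U, G, L, m)` of compact sets `X ⊆ U` such that `X ∪ A` is a surface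
with coboundary `⊇ L` with respect to `A` and `𝓗^m(X) < ∞`. -/
def Spanning (T : CechTheory n R G) (m : ℕ) (A U : Set (Euc n))
    (L : Set (T.Hred (m - 1) A)) : Set (Set (Euc n)) :=
  {X | X ⊆ U ∧ IsCompact X ∧ T.IsSurface m A (X ∪ A) L ∧ μH[(m : ℝ)] X < ⊤}

end CechTheory

/-- The core `X*` of a set `X` (of Hausdorff dimension `m`): the points `p ∈ X` all of whose
neighborhoods meet `X` in a set of positive `m`-dimensional Hausdorff measure. -/
def core {n : ℕ} (m : ℕ) (X : Set (Euc n)) : Set (Euc n) :=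
  {p | p ∈ X ∧ ∀ r : ℝ, 0 < r → 0 < μH[(m : ℝ)] (X ∩ Metric.ball p r)}

/-!
If `X` contains the ball, then the inclusion of the sphere into `X` is nullhomotopic, so the
pullback is zero and only the zero class is attained. If `X` misses a point `p` of the ball, then
projecting radially from `p` retracts `X` onto the sphere, so the pullback has a section and every
class is attained. Both arguments work for a bounded convex set in place of the ball, the
radial projection being expressed by the gauge of the convex set translated by `-p`.
-/

section RadialProjection

open scoped Pointwise Topology

variable {E : Type*} [AddCommGroup E] [Module ℝ E]

/-- The radial projection from the origin onto the frontier of a convex neighborhood `s` of `0`.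
Its value at `0`, which determines no ray, is the junk value `0`. -/
def radialProjection (s : Set E) (x : E) : E := (gauge s x)⁻¹ • x

variable [TopologicalSpace E] [IsTopologicalAddGroup E] [ContinuousSMul ℝ E] {s : Set E} {x p : E}

theorem radialProjection_eq_self_of_mem_frontier (hs : Convex ℝ s) (hs₀ : s ∈ 𝓝 0)
    (hx : x ∈ frontier s) : radialProjection s x = x := by
  rw [radialProjection, (gauge_eq_one_iff_mem_frontier hs hs₀).2 hx, inv_one, one_smul]

variable [T1Space E]

theorem radialProjection_mem_frontier (hs : Convex ℝ s) (hs₀ : s ∈ 𝓝 0)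
    (hsb : Bornology.IsVonNBounded ℝ s) (hx : x ≠ 0) : radialProjection s x ∈ frontier s := by
  have hpos : 0 < gauge s x := (gauge_pos (absorbent_nhds_zero hs₀) hsb).2 hx
  rw [← gauge_eq_one_iff_mem_frontier hs hs₀, radialProjection,
    gauge_smul_of_nonneg (inv_nonneg.2 hpos.le), smul_eq_mul, inv_mul_cancel₀ hpos.ne']

theorem continuousOn_radialProjection (hs : Convex ℝ s) (hs₀ : s ∈ 𝓝 0)
    (hsb : Bornology.IsVonNBounded ℝ s) : ContinuousOn (radialProjection s) {0}ᶜ :=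
  ((continuous_gauge hs hs₀).continuousOn.inv₀ fun _ hx ↦
    ((gauge_pos (absorbent_nhds_zero hs₀) hsb).2 hx).ne').smul continuousOn_id

theorem exists_retraction_compl_zero_frontier (hs : Convex ℝ s) (hs₀ : s ∈ 𝓝 0)
    (hsb : Bornology.IsVonNBounded ℝ s) :
    ∃ r : C(({0}ᶜ : Set E), frontier s),
      ∀ x : ({0}ᶜ : Set E), (x : E) ∈ frontier s → (r x : E) = x :=
  ⟨⟨fun x ↦ ⟨radialProjection s x, radialProjection_mem_frontier hs hs₀ hsb x.2⟩,
      (continuousOn_radialProjection hs hs₀ hsb).domRestrict.subtype_mk _⟩,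
    fun _ ↦ radialProjection_eq_self_of_mem_frontier hs hs₀⟩

theorem exists_retraction_compl_singleton_frontier (hs : Convex ℝ s) (hsp : s ∈ 𝓝 p)
    (hsb : Bornology.IsVonNBounded ℝ s) :
    ∃ r : C(({p}ᶜ : Set E), frontier s),
      ∀ x : ({p}ᶜ : Set E), (x : E) ∈ frontier s → (r x : E) = x := by
  let e : E ≃ₜ E := Homeomorph.addLeft p
  have mem_frontier (y : E) : y ∈ frontier (e ⁻¹' s) ↔ e y ∈ frontier s := by
    rw [← e.preimage_frontier, mem_preimage]
  have hs₀ : e ⁻¹' s ∈ 𝓝 0 := e.continuous.continuousAt.preimage_mem_nhds (by simpa [e] using hsp)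
  have hsb' : Bornology.IsVonNBounded ℝ (e ⁻¹' s) := by
    rw [show e ⁻¹' s = -p +ᵥ s from preimage_vadd p s]
    exact hsb.vadd (-p)
  obtain ⟨r, hr⟩ := exists_retraction_compl_zero_frontier (hs.translate_preimage_right p) hs₀ hsb'
  let toOrigin : C(({p}ᶜ : Set E), ({0}ᶜ : Set E)) :=
    ⟨fun x ↦ ⟨e.symm x, fun h ↦ x.2 ((e.symm_apply_eq.1 h).trans (add_zero p))⟩, by fun_prop⟩
  refine ⟨⟨fun x ↦ ⟨e (r (toOrigin x)), (mem_frontier _).1 (r _).2⟩, by fun_prop⟩, fun x hx ↦ ?_⟩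
  have hx' : e.symm x ∈ frontier (e ⁻¹' s) := by rwa [mem_frontier, e.apply_symm_apply]
  exact (congrArg e (hr (toOrigin x) hx')).trans (e.apply_symm_apply _)

end RadialProjection

theorem nullhomotopic_inclusion_of_contractibleSpace {Y : Type*} [TopologicalSpace Y]
    {A B X : Set Y} [ContractibleSpace B] (hAB : A ⊆ B) (hBX : B ⊆ X) :
    (ContinuousMap.inclusion (hAB.trans hBX)).Nullhomotopic :=
  ((id_nullhomotopic B).comp_right (.inclusion hBX)).comp_left (.inclusion hAB)

namespace CechTheory

variable {n : ℕ} {R : Type} [CommRing R] {G : Type} [AddCommGroup G] [Module R G]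
  (T : CechTheory n R G) {A X : Set (Euc n)}

theorem mapRed_eq_zero_of_nullhomotopic (k : ℕ) {f : C(A, X)} (hf : f.Nullhomotopic) :
    T.mapRed k f = 0 := by
  obtain ⟨p, hfp⟩ := hf
  let toPoint : C(A, ({(p : Euc n)} : Set (Euc n))) := .const A ⟨p, rfl⟩
  let ofPoint : C(({(p : Euc n)} : Set (Euc n)), X) := .const _ p
  ext y
  calc T.mapRed k f y
      = T.mapRed k (ofPoint.comp toPoint) y := by rw [T.mapRed_homotopic k _ _ hfp]; rfl
    _ = T.mapRed k toPoint (T.mapRed k ofPoint y) := by rw [T.mapRed_comp, ModuleCat.comp_apply]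
    _ = 0 := by rw [T.hred_point k p (T.mapRed k ofPoint y), map_zero]

theorem K_eq_setOf_ne_zero_of_nullhomotopic (m : ℕ) (hAX : A ⊆ X)
    (hnull : (ContinuousMap.inclusion hAX).Nullhomotopic) : T.K m X A hAX = {x | x ≠ 0} := by
  have hres : T.res (m - 1) hAX = 0 := T.mapRed_eq_zero_of_nullhomotopic _ hnull
  ext x
  simp [K, hres, eq_comm]

theorem res_surjective_of_retraction (k : ℕ) (hAX : A ⊆ X) (r : C(X, A))
    (hr : r.comp (.inclusion hAX) = .id A) : Function.Surjective (T.res k hAX) := by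
  have hsection : T.mapRed k r ≫ T.res k hAX = 𝟙 _ := by
    rw [← T.mapRed_id, ← hr]
    exact (T.mapRed_comp k _ _).symm
  intro x
  exact ⟨T.mapRed k r x, by rw [← ModuleCat.comp_apply, hsection, ModuleCat.id_apply]⟩

theorem K_eq_empty_iff (m : ℕ) (hAX : A ⊆ X) :
    T.K m X A hAX = ∅ ↔ Function.Surjective (T.res (m - 1) hAX) := by
  simp [K, eq_empty_iff_forall_notMem, Function.Surjective]

variable {C : Set (Euc n)}

theorem K_frontier_eq_setOf_ne_zero (m : ℕ) (hC : Convex ℝ C) (hne : C.Nonempty)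
    (hX : frontier C ⊆ X) (hCX : C ⊆ X) : T.K m X (frontier C) hX = {x | x ≠ 0} := by
  have : ContractibleSpace (closure C) := hC.closure.contractibleSpace hne.closure
  have hclosure : closure C ⊆ X := closure_eq_self_union_frontier C ▸ union_subset hCX hX
  exact T.K_eq_setOf_ne_zero_of_nullhomotopic m hX
    (nullhomotopic_inclusion_of_contractibleSpace frontier_subset_closure hclosure)

theorem K_frontier_eq_empty (m : ℕ) (hC : Convex ℝ C) (hCb : Bornology.IsBounded C)
    (hX : frontier C ⊆ X) (hCX : ¬ C ⊆ X) : T.K m X (frontier C) hX = ∅ := by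
  obtain ⟨p, hpC, hpX⟩ := not_subset.1 hCX
  have hCp : C ∈ nhds p := mem_interior_iff_mem_nhds.1 <|
    (mem_interior_iff_notMem_frontier hpC).2 fun hp ↦ hpX (hX hp)
  obtain ⟨r, hr⟩ := exists_retraction_compl_singleton_frontier hC hCp
    ((NormedSpace.isVonNBounded_iff ℝ).2 hCb)
  have hXp : X ⊆ {p}ᶜ := subset_compl_singleton_iff.2 hpX
  rw [K_eq_empty_iff]
  exact T.res_surjective_of_retraction _ hX (r.comp (.inclusion hXp))
    (ContinuousMap.ext fun a ↦ Subtype.ext (hr _ a.2))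

end CechTheory

theorem stmt3_general {n : ℕ} {R : Type} [CommRing R] {G : Type} [AddCommGroup G] [Module R G]
    (T : CechTheory n R G) (m : ℕ) {C X : Set (Euc n)} (hC : Convex ℝ C)
    (hCb : Bornology.IsBounded C) (hne : C.Nonempty) (hX : frontier C ⊆ X) :
    (C ⊆ X → T.K m X (frontier C) hX = {x : T.Hred (m - 1) (frontier C) | x ≠ 0}) ∧
    (¬ C ⊆ X → T.K m X (frontier C) hX = ∅) :=
  ⟨T.K_frontier_eq_setOf_ne_zero m hC hne hX, T.K_frontier_eq_empty m hC hCb hX⟩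

/-- Let `m = n` and let `A` be the unit sphere in `ℝⁿ`, and suppose `X ⊇ A`.
If `X` contains the closed unit ball then `K*(X,A) = H̃^{n-1}(A) \ {0}`; if `X` does not contain
the closed unit ball then `K*(X,A) = ∅`. -/
theorem stmt3 {n : ℕ} {R : Type} [CommRing R] {G : Type} [AddCommGroup G] [Module R G]
    (T : CechTheory n R G) (hn : 1 ≤ n)
    (X : Set (Euc n)) (hAX : Metric.sphere (0 : Euc n) 1 ⊆ X) :
    (Metric.closedBall (0 : Euc n) 1 ⊆ X →
      T.K n X (Metric.sphere (0 : Euc n) 1) hAX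
        = {x : T.Hred (n - 1) (Metric.sphere (0 : Euc n) 1) | x ≠ 0}) ∧
    (¬ Metric.closedBall (0 : Euc n) 1 ⊆ X →
      T.K n X (Metric.sphere (0 : Euc n) 1) hAX = ∅) := by
  revert hAX
  rw [← frontier_closedBall (0 : Euc n) one_ne_zero]
  exact stmt3_general T n (convex_closedBall 0 1) Metric.isBounded_closedBall
    (Metric.nonempty_closedBall.2 zero_le_one)
end
end

section
/- Let f : I × Y → X be a continuous map into X ⊆ ℝⁿ, where I = [0,1]. Set A₀ = f({0} × Y), A₁ = f({1} × Y), A = A₀ ∪ A₁, f₀ = f restricted to {0} × Y and f₁ = f restricted to {1} × Y. Suppose f₀ is a homeomorphism from {0} × Y onto A₀, and let L₀ ⊆ H̃^{m−1}(A₀) \ {0}. Then there exists L₁ ⊆ H̃^{m−1}(A₁) \ {0} such that (i) K*(X,A) ∪ (ι(A,A₀)*)^{−1}(L₀) = K*(X,A) ∪ (ι(A,A₁)*)^{−1}(L₁), and (ii) if X is a surface with coboundary ⊇ L₀ (with respect to A₀), then X is a surface with coboundary ⊇ L₁ (with respect to A₁). -/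
/-!
Formalization background.  Čech cohomology is not available in Mathlib, so we axiomatize it:
a `CechTheory n R G` provides reduced, unreduced and relative Čech cohomology `R`-modules with
coefficients in the `R`-module `G` for subsets of `ℝⁿ` (with the subspace topology), together
with contravariant functoriality, homotopy invariance, the comparison between reduced and
unreduced cohomology in positive degrees, the natural projection onto reduced cohomology in
degree `0`, the convention `H̃⁰(∅) = 0`, the vanishing of the reduced cohomology of a point,
and the continuity property of Čech cohomology for directed intersections of compact sets.
-/

open Set CategoryTheory MeasureTheory Filter
open scoped ENNReal unitInterval

noncomputable section

/-!
Sliding `A₀` along the homotopy `f` gives a map `g : A₀ → A₁` such that the inclusion of `A₀` into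
`X` is homotopic in `X` to `g` followed by the inclusion of `A₁`, whence
`ι(X,A₀)* = g* ∘ ι(X,A₁)*`. Take `L₁ = (g*)⁻¹(L₀)`: a class on `X` then restricts into `L₀` on `A₀`
exactly when it restricts into `L₁` on `A₁`. Both conclusions concern nothing but such classes,
since everything in `H̃^{m-1}(A)` that does not come from `X` lies in `K*(X,A)`.
-/

theorem exists_homotopic_inclusion_comp {E Y : Type*} [TopologicalSpace E] [TopologicalSpace Y]
    {A₀ A₁ X : Set E} (h₀ : A₀ ⊆ X) (h₁ : A₁ ⊆ X) (f : C(I × Y, X)) (s : C(A₀, Y))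
    (hs : ∀ a, (f (0, s a) : E) = a) (hf₁ : ∀ a, (f (1, s a) : E) ∈ A₁) :
    ∃ g : C(A₀, A₁),
      (ContinuousMap.inclusion h₀).Homotopic ((ContinuousMap.inclusion h₁).comp g) :=
  ⟨⟨fun a => ⟨f (1, s a), hf₁ a⟩, by fun_prop⟩,
    ⟨{ toFun := fun p => f (p.1, s p.2)
       map_zero_left := fun a => Subtype.ext (hs a)
       map_one_left := fun _ => rfl }⟩⟩

theorem compl_range_union_eq_compl_range_union_iff {α β : Type*} (f : α → β) {s t : Set β} :
    (range f)ᶜ ∪ s = (range f)ᶜ ∪ t ↔ f ⁻¹' s = f ⁻¹' t := by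
  simp only [Set.ext_iff, mem_union, mem_compl_iff, mem_preimage, mem_range]
  grind

namespace CechTheory

variable {n : ℕ} {R : Type} [CommRing R] {G : Type} [AddCommGroup G] [Module R G]
  (T : CechTheory n R G)

theorem res_res (k : ℕ) {B A X : Set (Euc n)} (hBA : B ⊆ A) (hAX : A ⊆ X) (x : T.Hred k X) :
    T.res k hBA (T.res k hAX x) = T.res k (hBA.trans hAX) x :=
  (ConcreteCategory.congr_hom
    (T.mapRed_comp k (ContinuousMap.inclusion hBA) (ContinuousMap.inclusion hAX)) x).symm

theorem res_eq_mapRed_res (k : ℕ) {A₀ A₁ X : Set (Euc n)} {h₀ : A₀ ⊆ X} {h₁ : A₁ ⊆ X}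
    {g : C(A₀, A₁)}
    (hg : (ContinuousMap.inclusion h₀).Homotopic ((ContinuousMap.inclusion h₁).comp g))
    (x : T.Hred k X) : T.res k h₀ x = T.mapRed k g (T.res k h₁ x) :=
  ConcreteCategory.congr_hom
    ((T.mapRed_homotopic k _ _ hg).trans (T.mapRed_comp k g (ContinuousMap.inclusion h₁))) x

-- Here and below `k` is `m - 1`, which avoids the truncated subtraction in `K` and `IsSurface`.
theorem K_union_eq_K_union_iff {k : ℕ} {A X : Set (Euc n)} (h : A ⊆ X)
    {S S' : Set (T.Hred k A)} :
    T.K (k + 1) X A h ∪ S = T.K (k + 1) X A h ∪ S' ↔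
      T.res k h ⁻¹' S = T.res k h ⁻¹' S' :=
  compl_range_union_eq_compl_range_union_iff _

theorem isSurface_iff_preimage_eq_empty {k : ℕ} {A X : Set (Euc n)} (h : A ⊆ X)
    {L : Set (T.Hred k A)} :
    T.IsSurface (k + 1) A X L ↔ T.res k h ⁻¹' L = ∅ := by
  rw [preimage_eq_empty_iff, disjoint_left]
  exact exists_prop_of_true h

end CechTheory

theorem stmt4_general {n : ℕ} {R : Type} [CommRing R] {G : Type} [AddCommGroup G] [Module R G]
    (T : CechTheory n R G) (k : ℕ) {A₀ A₁ A X : Set (Euc n)}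
    (h₀ : A₀ ⊆ A) (h₁ : A₁ ⊆ A) (hAX : A ⊆ X) {g : C(A₀, A₁)}
    (hg : (ContinuousMap.inclusion (h₀.trans hAX)).Homotopic
      ((ContinuousMap.inclusion (h₁.trans hAX)).comp g))
    (L₀ : Set (T.Hred k A₀)) (hL₀ : 0 ∉ L₀) :
    ∃ L₁ : Set (T.Hred k A₁), 0 ∉ L₁ ∧
      T.K (k + 1) X A hAX ∪ T.res k h₀ ⁻¹' L₀ = T.K (k + 1) X A hAX ∪ T.res k h₁ ⁻¹' L₁ ∧
      (T.IsSurface (k + 1) A₀ X L₀ → T.IsSurface (k + 1) A₁ X L₁) := by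
  have preimage_eq : T.res k (h₀.trans hAX) ⁻¹' L₀ =
      T.res k (h₁.trans hAX) ⁻¹' (T.mapRed k g ⁻¹' L₀) := by
    ext x
    simp only [mem_preimage, T.res_eq_mapRed_res k hg]
  refine ⟨T.mapRed k g ⁻¹' L₀, by rwa [mem_preimage, map_zero], ?_, fun hX => ?_⟩
  · rw [T.K_union_eq_K_union_iff]
    ext x
    simpa only [mem_preimage, T.res_res] using Set.ext_iff.1 preimage_eq x
  · rwa [T.isSurface_iff_preimage_eq_empty (h₁.trans hAX), ← preimage_eq,
      ← T.isSurface_iff_preimage_eq_empty]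

/-- Let `f : I × Y → X` be continuous, `A₀ = f({0} × Y)`, `A₁ = f({1} × Y)`,
`A = A₀ ∪ A₁`, and suppose `f₀ = f|_{{0} × Y}` is a homeomorphism onto `A₀` (equivalently,
`y ↦ f(0,y)` is a homeomorphism of `Y` onto `A₀`).  Given `L₀ ⊆ H̃^{m-1}(A₀) \ {0}`, there is
`L₁ ⊆ H̃^{m-1}(A₁) \ {0}` with
`K*(X,A) ∪ (ι(A,A₀)*)⁻¹(L₀) = K*(X,A) ∪ (ι(A,A₁)*)⁻¹(L₁)`, and such that if `X` is a surface
with coboundary `⊇ L₀` then `X` is a surface with coboundary `⊇ L₁`. -/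
theorem stmt4 {n : ℕ} {R : Type} [CommRing R] {G : Type} [AddCommGroup G] [Module R G]
    (T : CechTheory n R G) (m : ℕ) (hm : 1 ≤ m) (hmn : m ≤ n)
    (X : Set (Euc n)) (Y : Type) [TopologicalSpace Y]
    (f : C(unitInterval × Y, X))
    (A₀ A₁ A : Set (Euc n))
    (hA₀ : A₀ = Set.range fun y : Y => ((f (0, y) : X) : Euc n))
    (hA₁ : A₁ = Set.range fun y : Y => ((f (1, y) : X) : Euc n))
    (hA : A = A₀ ∪ A₁)
    (hAX : A ⊆ X)
    (hf₀ : IsHomeomorph fun y : Y =>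
      (⟨((f (0, y) : X) : Euc n), by rw [hA₀]; exact Set.mem_range_self y⟩ : A₀))
    (L₀ : Set (T.Hred (m - 1) A₀)) (hL₀ : (0 : T.Hred (m - 1) A₀) ∉ L₀) :
    ∃ L₁ : Set (T.Hred (m - 1) A₁), (0 : T.Hred (m - 1) A₁) ∉ L₁ ∧
      T.K m X A hAX ∪
          T.res (m - 1) (show A₀ ⊆ A by rw [hA]; exact Set.subset_union_left) ⁻¹' L₀
        = T.K m X A hAX ∪
          T.res (m - 1) (show A₁ ⊆ A by rw [hA]; exact Set.subset_union_right) ⁻¹' L₁ ∧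
      (T.IsSurface m A₀ X L₀ → T.IsSurface m A₁ X L₁) := by
  obtain ⟨g, hg⟩ := exists_homotopic_inclusion_comp _ _ f (hf₀.homeomorph.symm : C(A₀, Y))
    (fun a => congrArg Subtype.val (hf₀.homeomorph.apply_symm_apply a))
    (fun _ => hA₁ ▸ mem_range_self _)
  obtain ⟨k, rfl⟩ := Nat.exists_eq_add_of_le' hm
  exact stmt4_general T k _ _ hAX hg L₀ hL₀
end
end

section
/- Suppose X = X₁ ∪ ⋯ ∪ X_N ⊆ ℝⁿ, A ⊆ X, and A_r ⊆ X_r for each r. Let B = A ∪ A₁ ∪ ⋯ ∪ A_N. For each r, let L_r ⊆ H̃^{m−1}(A_r) \ {0} and suppose X_r is a surface with coboundary ⊇ L_r. Suppose L ⊆ H̃^{m−1}(A) \ {0} satisfies (ι(B,A)*)^{−1}(L) ⊆ ∪_r (ι(B,A_r)*)^{−1}(L_r). Then X is a surface with coboundary ⊇ L. -/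
/-!
Formalization background.  Čech cohomology is not available in Mathlib, so we axiomatize it:
a `CechTheory n R G` provides reduced, unreduced and relative Čech cohomology `R`-modules with
coefficients in the `R`-module `G` for subsets of `ℝⁿ` (with the subspace topology), together
with contravariant functoriality, homotopy invariance, the comparison between reduced and
unreduced cohomology in positive degrees, the natural projection onto reduced cohomology in
degree `0`, the convention `H̃⁰(∅) = 0`, the vanishing of the reduced cohomology of a point,
and the continuity property of Čech cohomology for directed intersections of compact sets.
-/

open Set CategoryTheory MeasureTheory Filter
open scoped ENNReal unitInterval

noncomputable section

namespace CechTheory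

variable {n : ℕ} {R : Type} [CommRing R] {G : Type} [AddCommGroup G] [Module R G]
  (T : CechTheory n R G)

theorem res_comp_res (k : ℕ) {A B C : Set (Euc n)} (hAB : A ⊆ B) (hBC : B ⊆ C) :
    T.res k hBC ≫ T.res k hAB = T.res k (hAB.trans hBC) :=
  (T.mapRed_comp k ⟨inclusion hAB, continuous_inclusion hAB⟩
    ⟨inclusion hBC, continuous_inclusion hBC⟩).symm

theorem res_res_s5 (k : ℕ) {A B C : Set (Euc n)} (hAB : A ⊆ B) (hBC : B ⊆ C) (z : T.Hred k C) :
    T.res k hAB (T.res k hBC z) = T.res k (hAB.trans hBC) z :=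
  ConcreteCategory.congr_hom (T.res_comp_res k hAB hBC) z

variable {T} {m : ℕ} {A X Y : Set (Euc n)} {L : Set (T.Hred (m - 1) A)}

theorem isSurface_iff_forall_res_notMem :
    T.IsSurface m A X L ↔ ∃ h : A ⊆ X, ∀ z, T.res (m - 1) h z ∉ L := by
  simp only [IsSurface, mem_range, not_exists]
  exact exists_congr fun _ ↦
    ⟨fun hL z hz ↦ hL _ hz z rfl, fun hL _ hx z hz ↦ hL z (hz ▸ hx)⟩

theorem IsSurface.mono (hX : T.IsSurface m A X L) (hXY : X ⊆ Y) : T.IsSurface m A Y L := by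
  obtain ⟨hAX, hL⟩ := isSurface_iff_forall_res_notMem.1 hX
  refine isSurface_iff_forall_res_notMem.2 ⟨hAX.trans hXY, fun z hz ↦ ?_⟩
  exact hL (T.res (m - 1) hXY z) (by rwa [res_res_s5])

end CechTheory

-- A class on `X` restricting into `L` would, through its restriction to `B`, also restrict into
-- some `L' r`; but `X` inherits from `X' r` the property that this cannot happen.
theorem stmt5_general {n : ℕ} {R : Type} [CommRing R] {G : Type} [AddCommGroup G] [Module R G]
    {T : CechTheory n R G} {m : ℕ} {ι : Sort*} {X A B : Set (Euc n)} {X' A' : ι → Set (Euc n)}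
    (hAB : A ⊆ B) (hA'B : ∀ r, A' r ⊆ B) (hBX : B ⊆ X) (hX'X : ∀ r, X' r ⊆ X)
    {L' : ∀ r, Set (T.Hred (m - 1) (A' r))} (hsurf : ∀ r, T.IsSurface m (A' r) (X' r) (L' r))
    {L : Set (T.Hred (m - 1) A)}
    (hE : T.res (m - 1) hAB ⁻¹' L ⊆ ⋃ r, T.res (m - 1) (hA'B r) ⁻¹' L' r) :
    T.IsSurface m A X L := by
  refine CechTheory.isSurface_iff_forall_res_notMem.2 ⟨hAB.trans hBX, fun z hzL ↦ ?_⟩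
  have hzB : T.res (m - 1) hBX z ∈ T.res (m - 1) hAB ⁻¹' L := by
    rwa [mem_preimage, T.res_res_s5]
  obtain ⟨r, hzr⟩ := mem_iUnion.1 (hE hzB)
  rw [mem_preimage, T.res_res_s5] at hzr
  obtain ⟨_, hL'⟩ := CechTheory.isSurface_iff_forall_res_notMem.1 ((hsurf r).mono (hX'X r))
  exact hL' z hzr

/-- Lemma 11A.  Suppose `X = X₁ ∪ ⋯ ∪ X_N`, `A ⊆ X`, `A_r ⊆ X_r` for each
`r`, and `B = A ∪ A₁ ∪ ⋯ ∪ A_N`.  For each `r` let `L_r ⊆ H̃^{m-1}(A_r) \ {0}` and suppose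
`X_r` is a surface with coboundary `⊇ L_r`.  If `L ⊆ H̃^{m-1}(A) \ {0}` satisfies
`(ι(B,A)*)⁻¹(L) ⊆ ∪_r (ι(B,A_r)*)⁻¹(L_r)` then `X` is a surface with coboundary `⊇ L`. -/
theorem stmt5 {n : ℕ} {R : Type} [CommRing R] {G : Type} [AddCommGroup G] [Module R G]
    (T : CechTheory n R G) (m N : ℕ) (hm : 1 ≤ m) (hmn : m ≤ n)
    (X A B : Set (Euc n)) (X' A' : Fin N → Set (Euc n))
    (hX : X = ⋃ r, X' r) (hAX : A ⊆ X) (hA' : ∀ r, A' r ⊆ X' r)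
    (hB : B = A ∪ ⋃ r, A' r)
    (L' : ∀ r : Fin N, Set (T.Hred (m - 1) (A' r)))
    (hL' : ∀ r, (0 : T.Hred (m - 1) (A' r)) ∉ L' r)
    (hsurf : ∀ r, T.IsSurface m (A' r) (X' r) (L' r))
    (L : Set (T.Hred (m - 1) A)) (hL : (0 : T.Hred (m - 1) A) ∉ L)
    (hE : T.res (m - 1) (show A ⊆ B by rw [hB]; exact Set.subset_union_left) ⁻¹' L ⊆
      ⋃ r : Fin N, T.res (m - 1)
        (show A' r ⊆ B by
          rw [hB]; exact (Set.subset_iUnion A' r).trans Set.subset_union_right) ⁻¹' L' r) :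
    T.IsSurface m A X L := by
  subst hX hB
  exact stmt5_general _ _ (union_subset hAX (iUnion_mono hA')) (subset_iUnion X') hsurf hE
end
end
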